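/- Let A be a finitely generated free abelian group. Then Γ(A) is isomorphic to the subgroup of symmetric tensors in A ⊗ A via the map sending v(a) to a ⊗ a. -/

import Mathlib

open TensorProduct

/-- The relations defining Whitehead's quadratic group `Γ(A)`:
`v(-a) - v(a)` and `v(a+b+c) - v(b+c) - v(c+a) - v(a+b) + v(a) + v(b) + v(c)`. -/
def gammaRels (A : Type*) [AddCommGroup A] : AddSubgroup (FreeAbelianGroup A) :=
  AddSubgroup.closure
    ({x | ∃ a : A, x = FreeAbelianGroup.of (-a) - FreeAbelianGroup.of a} ∪
     {x | ∃ a b c : A, x =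
        FreeAbelianGroup.of (a + b + c) - FreeAbelianGroup.of (b + c)
          - FreeAbelianGroup.of (c + a) - FreeAbelianGroup.of (a + b)
          + FreeAbelianGroup.of a + FreeAbelianGroup.of b + FreeAbelianGroup.of c})

/-- Whitehead's quadratic group `Γ(A)`: the abelian group generated by the symbols `v(a)`, `a ∈ A`,
modulo the relations `v(-a) = v(a)` and
`v(a+b+c) - v(b+c) - v(c+a) - v(a+b) + v(a) + v(b) + v(c) = 0`. -/
abbrev GammaW (A : Type*) [AddCommGroup A] := FreeAbelianGroup A ⧸ gammaRels A

/-- The generator `v(a)` of `Γ(A)`. -/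
def vW {A : Type*} [AddCommGroup A] (a : A) : GammaW A :=
  QuotientAddGroup.mk (FreeAbelianGroup.of a)

/-- The submodule of symmetric tensors of `V ⊗[R] V`, i.e. the elements fixed by the swap
involution `a ⊗ b ↦ b ⊗ a`. -/
noncomputable def symTensorsR (R : Type*) (V : Type*) [CommRing R] [AddCommGroup V]
    [Module R V] :=
  LinearMap.ker ((TensorProduct.comm R V V).toLinearMap - LinearMap.id)

/-- The subgroup of symmetric tensors of `V ⊗[ℤ] V`.  For `V` free abelian this realises
Whitehead's quadratic functor `Γ(V)`. -/
noncomputable abbrev symTensors (V : Type*) [AddCommGroup V] [Module ℤ V] :=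
  symTensorsR ℤ V

/-
The map `v : A → Γ(A)` is quadratic over `ℤ`, and universally so; hence `v(a) ↦ a ⊗ a` is well
defined on `Γ(A)`. When `A` is free, `v` is the diagonal of a (nonsymmetric) bilinear map `B`.
Its linear extension `a ⊗ b ↦ B a b`, again written `B`, takes `a ⊗ a` back to `v(a)`, so the map is
injective. For surjectivity onto the symmetric tensors, `2 • B(t)` for symmetric `t` is the value at
`t` of the polarization of the diagonal of `B`, so on symmetric tensors a bilinear map with
torsion-free values depends only on its diagonal. The bilinear map obtained from `B` by composing
with `Γ(A) → A ⊗ A` has the same diagonal as `(a, b) ↦ a ⊗ b`, so `Γ(A) → A ⊗ A` sends `B(t)`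
to `t`.
-/

section EvenPolarAdditive

open QuadraticMap (polar polar_comm)

variable {A N : Type*} [AddCommGroup A] [AddCommGroup N] {f : A → N}

section PolarAdditive

variable (hadd : ∀ a b c, polar f (a + b) c = polar f a c + polar f b c)

include hadd

theorem polar_zsmul_left_of_polar_add_left (n : ℤ) (a b : A) :
    polar f (n • a) b = n • polar f a b :=
  map_zsmul (AddMonoidHom.mk' (polar f · b) (hadd · · b)) n a

theorem polar_neg_left_of_polar_add_left (a b : A) : polar f (-a) b = -polar f a b :=
  map_neg (AddMonoidHom.mk' (polar f · b) (hadd · · b)) a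

theorem map_zero_of_polar_add_left : f 0 = 0 := by
  simpa [polar] using hadd 0 0 0

variable (hneg : ∀ a, f (-a) = f a)

include hneg

theorem polar_self_of_even (a : A) : polar f a a = 2 • f a := by
  have h : polar f (-a) a = -(2 • f a) := by
    rw [polar, neg_add_cancel, map_zero_of_polar_add_left hadd, hneg]
    abel
  rwa [polar_neg_left_of_polar_add_left hadd, neg_inj] at h

theorem map_zsmul_of_even (n : ℤ) (a : A) : f (n • a) = (n * n) • f a := by
  have hpolar (m : ℤ) : polar f (m • a) a = (m * 2) • f a := by
    rw [polar_zsmul_left_of_polar_add_left hadd, polar_self_of_even hadd hneg, mul_zsmul',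
      two_nsmul, two_zsmul, zsmul_add]
  induction n with
  | zero => simpa using map_zero_of_polar_add_left hadd
  | succ n ih =>
    rw [add_zsmul, one_zsmul, QuadraticMap.map_add f, ih, hpolar]
    module
  | pred n ih =>
    have hpolar_neg : polar f (-(n : ℤ) • a) (-a) = -polar f (-(n : ℤ) • a) a := by
      rw [polar_comm, polar_neg_left_of_polar_add_left hadd, polar_comm]
    rw [sub_zsmul, one_zsmul, sub_eq_add_neg, QuadraticMap.map_add f, hpolar_neg, ih, hpolar, hneg]
    module

end PolarAdditive

/-- An even function between abelian groups whose polarization is additive in the first variable,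
as a quadratic map over `ℤ`. -/
def intQuadraticMapOfEven (f : A → N) (hneg : ∀ a, f (-a) = f a)
    (hadd : ∀ a b c, polar f (a + b) c = polar f a c + polar f b c) : QuadraticMap ℤ A N :=
  .ofPolar f (map_zsmul_of_even hadd hneg) hadd (polar_zsmul_left_of_polar_add_left hadd)

end EvenPolarAdditive

namespace GammaW

variable {A N : Type*} [AddCommGroup A] [AddCommGroup N]

theorem vW_neg (a : A) : vW (-a) = vW a :=
  QuotientAddGroup.eq_iff_sub_mem.mpr <| AddSubgroup.subset_closure <| .inl ⟨a, rfl⟩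

theorem polar_vW_add_left (a b c : A) :
    QuadraticMap.polar vW (a + b) c = QuadraticMap.polar vW a c + QuadraticMap.polar vW b c := by
  have hrel : vW (a + b + c) - vW (b + c) - vW (c + a) - vW (a + b) + vW a + vW b + vW c = 0 :=
    (QuotientAddGroup.eq_zero_iff _).mpr <| AddSubgroup.subset_closure <| .inr ⟨a, b, c, rfl⟩
  rw [QuadraticMap.polar_add_left_iff, ← sub_eq_zero, ← hrel]
  abel

variable [Module ℤ N]

variable (A) in
/-- The universal quadratic map `v : A → Γ(A)`. -/
def quadraticMap : QuadraticMap ℤ A (GammaW A) :=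
  intQuadraticMapOfEven vW vW_neg polar_vW_add_left

theorem gammaRels_le_ker_lift (Q : QuadraticMap ℤ A N) :
    gammaRels A ≤ (FreeAbelianGroup.lift Q).ker := by
  rw [gammaRels, AddSubgroup.closure_le]
  rintro _ (⟨a, rfl⟩ | ⟨a, b, c, rfl⟩)
  · simp
  · simp only [SetLike.mem_coe, AddMonoidHom.mem_ker, map_sub, map_add,
      FreeAbelianGroup.lift_apply_of]
    rw [← sub_eq_zero.mpr (Q.map_add_add_add_map a b c)]
    abel

/-- The linear map `Γ(A) → N` induced by a quadratic map `A → N`: the universal property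
of `Γ(A)`. -/
def lift (Q : QuadraticMap ℤ A N) : GammaW A →ₗ[ℤ] N where
  __ := QuotientAddGroup.lift (gammaRels A) (FreeAbelianGroup.lift Q) (gammaRels_le_ker_lift Q)
  map_smul' := map_intCast_smul (QuotientAddGroup.lift _ _ (gammaRels_le_ker_lift Q)) ℤ ℤ

@[simp]
theorem lift_vW (Q : QuadraticMap ℤ A N) (a : A) : lift Q (vW a) = Q a :=
  FreeAbelianGroup.lift_apply_of Q a

@[ext]
theorem linearMap_ext {f g : GammaW A →ₗ[ℤ] N} (h : ∀ a, f (vW a) = g (vW a)) : f = g :=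
  LinearMap.toAddMonoidHom_injective <|
    QuotientAddGroup.addMonoidHom_ext _ <| FreeAbelianGroup.lift_ext _ _ h

end GammaW

section SymmetricTensors

variable {R M N : Type*} [CommRing R] [AddCommGroup M] [Module R M] [AddCommGroup N] [Module R N]

theorem mem_symTensorsR {t : M ⊗[R] M} :
    t ∈ symTensorsR R M ↔ TensorProduct.comm R M M t = t := by
  simp [symTensorsR, sub_eq_zero]

theorem lift_polarBilin_toQuadraticMap (B : LinearMap.BilinMap R M N) (t : M ⊗[R] M) :
    TensorProduct.lift B.toQuadraticMap.polarBilin t =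
      TensorProduct.lift B t + TensorProduct.lift B (TensorProduct.comm R M M t) := by
  induction t with
  | zero => simp only [map_zero, add_zero]
  | tmul x y => simp [LinearMap.BilinMap.polar_toQuadraticMap]
  | add s t hs ht => simp only [map_add, hs, ht]; abel

theorem lift_eq_lift_of_mem_symTensorsR [IsAddTorsionFree N] {B C : LinearMap.BilinMap R M N}
    (h : ∀ x, B x x = C x x) {t : M ⊗[R] M} (ht : t ∈ symTensorsR R M) :
    TensorProduct.lift B t = TensorProduct.lift C t := by
  have two_nsmul_lift (D : LinearMap.BilinMap R M N) :
      2 • TensorProduct.lift D t = TensorProduct.lift D.toQuadraticMap.polarBilin t := by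
    rw [lift_polarBilin_toQuadraticMap, mem_symTensorsR.mp ht, two_nsmul]
  have hquad : B.toQuadraticMap = C.toQuadraticMap := QuadraticMap.ext h
  apply nsmul_right_injective two_ne_zero
  simp only [two_nsmul_lift, hquad]

end SymmetricTensors

namespace GammaW

variable (A : Type*) [AddCommGroup A]

-- Instance search would otherwise pick `AddCommGroup.toIntModule`, which is only propositionally
-- equal to the scalar action in `symTensors`.
noncomputable local instance intModuleTensor : Module ℤ (A ⊗[ℤ] A) := TensorProduct.instModule

/-- The homomorphism `Γ(A) → A ⊗ A` sending `v(a)` to `a ⊗ a`. -/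
noncomputable def toTensor : GammaW A →ₗ[ℤ] A ⊗[ℤ] A :=
  lift (LinearMap.BilinMap.toQuadraticMap (TensorProduct.mk ℤ A A))

variable {A} in
@[simp]
theorem toTensor_vW (a : A) : toTensor A (vW a) = a ⊗ₜ[ℤ] a :=
  lift_vW _ a

theorem range_toTensor_le : LinearMap.range (toTensor A) ≤ symTensors A := by
  have hcomm : (TensorProduct.comm ℤ A A).toLinearMap ∘ₗ toTensor A = toTensor A := by
    ext a
    simp only [LinearMap.comp_apply, LinearEquiv.coe_coe, toTensor_vW, TensorProduct.comm_tmul]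
  rintro _ ⟨x, rfl⟩
  exact mem_symTensorsR.mpr (LinearMap.congr_fun hcomm x)

variable [Module.Free ℤ A]

theorem exists_bilinMap_self_eq_vW :
    ∃ B : LinearMap.BilinMap ℤ A (GammaW A), ∀ a, B a a = vW a := by
  obtain ⟨B, hB⟩ := LinearMap.BilinMap.toQuadraticMap_surjective (quadraticMap A)
  exact ⟨B, QuadraticMap.ext_iff.mp hB⟩

theorem toTensor_injective : Function.Injective (toTensor A) := by
  obtain ⟨B, hB⟩ := exists_bilinMap_self_eq_vW A
  have hleft : TensorProduct.lift B ∘ₗ toTensor A = LinearMap.id := by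
    ext a
    rw [LinearMap.comp_apply, toTensor_vW, TensorProduct.lift.tmul, hB, LinearMap.id_apply]
  exact Function.LeftInverse.injective (LinearMap.congr_fun hleft)

theorem range_toTensor : LinearMap.range (toTensor A) = symTensors A := by
  refine (range_toTensor_le A).antisymm fun t ht ↦ ?_
  obtain ⟨B, hB⟩ := exists_bilinMap_self_eq_vW A
  have hdiag (a : A) : B.compr₂ (toTensor A) a a = TensorProduct.mk ℤ A A a a := by
    rw [LinearMap.compr₂_apply, hB, toTensor_vW, TensorProduct.mk_apply]
  have : IsAddTorsionFree (A ⊗[ℤ] A) := IsAddTorsionFree.of_isTorsionFree ℤ _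
  refine ⟨TensorProduct.lift B t, ?_⟩
  calc toTensor A (TensorProduct.lift B t)
      = TensorProduct.lift (B.compr₂ (toTensor A)) t := by
        rw [TensorProduct.lift_compr₂, LinearMap.comp_apply]
    _ = TensorProduct.lift (TensorProduct.mk ℤ A A) t := lift_eq_lift_of_mem_symTensorsR hdiag ht
    _ = t := by rw [TensorProduct.lift_mk, LinearMap.id_apply]

/-- Whitehead's `Γ(A)` for a free abelian group `A`, identified with the group of symmetric tensors
by `v(a) ↦ a ⊗ a`. -/
noncomputable def equivSymTensors : GammaW A ≃ₗ[ℤ] symTensors A :=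
  (LinearEquiv.ofInjective (toTensor A) (toTensor_injective A)).trans
    (LinearEquiv.ofEq _ _ (range_toTensor A))

variable {A} in
theorem coe_equivSymTensors_vW (a : A) : (equivSymTensors A (vW a) : A ⊗[ℤ] A) = a ⊗ₜ[ℤ] a :=
  toTensor_vW a

end GammaW

theorem stmt3_general {A : Type*} [AddCommGroup A] [Module ℤ A] [Module.Free ℤ A] :
    ∃ e : GammaW A ≃+ ↥(symTensors A),
      ∀ a : A, ((e (vW a) : ↥(symTensors A)) : TensorProduct ℤ A A) = a ⊗ₜ[ℤ] a := by
  obtain rfl : ‹Module ℤ A› = AddCommGroup.toIntModule A := Subsingleton.elim _ _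
  exact ⟨(GammaW.equivSymTensors A).toAddEquiv, GammaW.coe_equivSymTensors_vW⟩

/-- For a finitely generated free abelian group `A`, Whitehead's group `Γ(A)` is
isomorphic to the subgroup of symmetric tensors of `A ⊗ A` via the map `v(a) ↦ a ⊗ a`. -/
theorem stmt3 {A : Type*} [AddCommGroup A] [Module ℤ A] [Module.Finite ℤ A] [Module.Free ℤ A] :
    ∃ e : GammaW A ≃+ ↥(symTensors A),
      ∀ a : A, ((e (vW a) : ↥(symTensors A)) : TensorProduct ℤ A A) = a ⊗ₜ[ℤ] a :=
  stmt3_general
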